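/- Let γ ∈ [1,2) and F, M > 0, and let f : [0,∞) → ℝ belong to the Gevrey class G_{F,M,γ}([0,∞)). Then for every integer k ≥ 1 and every integer n ≥ 0, the n-th derivative of the k-th power of f satisfies sup_{t ≥ 0} |dⁿ(f(t)^k)/dtⁿ| ≤ (n+1)^{k−1}·F^k·M^n·(n!)^γ. -/

import Mathlib

/-!
The proof is by induction on `k`. By the Leibniz rule, the `n`-th derivative of `f ^ (k + 1)` is a
sum of `n + 1` terms `C(n,i) * (f ^ k)⁽ⁱ⁾ * f⁽ⁿ⁻ⁱ⁾`. Since `C(n,i) ≥ 1` and `γ ≥ 1`,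
`C(n,i) * (i!)^γ * ((n-i)!)^γ = C(n,i)^(1-γ) * (n!)^γ ≤ (n!)^γ`
(`choose_mul_factorial_rpow_le`), so every term is at most
`(n+1)^(k-1) * F^(k+1) * M^n * (n!)^γ`, and summing contributes one more factor `n + 1`.
-/

noncomputable section

/-- `f` belongs to the Gevrey class `G_{F,M,γ}([0,∞))`. -/
def InGevrey (F M γ : ℝ) (f : ℝ → ℝ) : Prop :=
  ContDiff ℝ (⊤ : ℕ∞) f ∧
    ∀ n : ℕ, ∀ t : ℝ, 0 ≤ t →
      |iteratedDeriv n f t| ≤ F * M ^ n * (Nat.factorial n : ℝ) ^ γ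

lemma choose_mul_factorial_rpow_le {γ : ℝ} (hγ : 1 ≤ γ) {n i : ℕ} (hi : i ≤ n) :
    (n.choose i : ℝ) * ((Nat.factorial i : ℝ) ^ γ * (Nat.factorial (n - i) : ℝ) ^ γ) ≤
      (Nat.factorial n : ℝ) ^ γ := by
  have hc : (1 : ℝ) ≤ n.choose i := by exact_mod_cast Nat.choose_pos hi
  have hle : (n.choose i : ℝ) ≤ (n.choose i : ℝ) ^ γ := Real.self_le_rpow_of_one_le hc hγ
  have hfac : (Nat.factorial n : ℝ) =
      n.choose i * (Nat.factorial i * Nat.factorial (n - i)) := by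
    rw [← mul_assoc]
    exact_mod_cast (Nat.choose_mul_factorial_mul_factorial hi).symm
  rw [hfac, Real.mul_rpow (by positivity) (by positivity),
    Real.mul_rpow (by positivity) (by positivity)]
  gcongr

/-- If `f ∈ G_{F,M,γ}` with `γ ∈ [1,2)`, then for every `k ≥ 1` and `n ≥ 0`,
`sup_{t ≥ 0} |dⁿ(f(t)ᵏ)/dtⁿ| ≤ (n+1)^{k−1}·Fᵏ·Mⁿ·(n!)^γ`. -/
theorem gevrey_pow_bound (γ F M : ℝ) (hγ1 : 1 ≤ γ) (hγ2 : γ < 2)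
    (hF : 0 < F) (hM : 0 < M) (f : ℝ → ℝ) (hf : InGevrey F M γ f) :
    ∀ k : ℕ, 1 ≤ k → ∀ n : ℕ, ∀ t : ℝ, 0 ≤ t →
      |iteratedDeriv n (fun s => f s ^ k) t| ≤
        ((n : ℝ) + 1) ^ (k - 1) * F ^ k * M ^ n * (Nat.factorial n : ℝ) ^ γ := by
  obtain ⟨hsm, hbd⟩ := hf
  have hsmn : ∀ n : ℕ, ContDiff ℝ n f := fun n => hsm.of_le (by exact_mod_cast le_top)
  intro k hk
  induction k, hk using Nat.le_induction with
  | base => intro n t ht; simpa using hbd n t ht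
  | succ k hk ih =>
    intro n t ht
    have hL : iteratedDeriv n (fun s => f s ^ (k + 1)) t =
        ∑ i ∈ Finset.range (n + 1), (n.choose i : ℝ) *
          iteratedDeriv i (fun s => f s ^ k) t * iteratedDeriv (n - i) f t := by
      have hfun : (fun s => f s ^ (k + 1)) = (fun s => f s ^ k) * f := by
        ext s; simp [pow_succ]
      rw [hfun]
      exact iteratedDeriv_mul ((hsmn n).pow k).contDiffAt (hsmn n).contDiffAt
    have hterm : ∀ i ∈ Finset.range (n + 1), |(n.choose i : ℝ) *
        iteratedDeriv i (fun s => f s ^ k) t * iteratedDeriv (n - i) f t| ≤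
        ((n : ℝ) + 1) ^ (k - 1) * F ^ (k + 1) * M ^ n * (Nat.factorial n : ℝ) ^ γ := by
      intro i hi
      have hin : i ≤ n := Nat.lt_succ_iff.mp (Finset.mem_range.mp hi)
      have hinR : (i : ℝ) ≤ n := by exact_mod_cast hin
      rw [abs_mul, abs_mul, Nat.abs_cast]
      calc (n.choose i : ℝ) * |iteratedDeriv i (fun s => f s ^ k) t| * |iteratedDeriv (n - i) f t|
          ≤ (n.choose i : ℝ) *
              (((n : ℝ) + 1) ^ (k - 1) * F ^ k * M ^ i * (Nat.factorial i : ℝ) ^ γ) *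
              (F * M ^ (n - i) * (Nat.factorial (n - i) : ℝ) ^ γ) := by
            gcongr
            · exact (ih i t ht).trans (by gcongr)
            · exact hbd _ t ht
        _ = ((n : ℝ) + 1) ^ (k - 1) * F ^ (k + 1) * (M ^ i * M ^ (n - i)) *
              ((n.choose i : ℝ) *
                ((Nat.factorial i : ℝ) ^ γ * (Nat.factorial (n - i) : ℝ) ^ γ)) := by ring
        _ ≤ _ := by
            rw [← pow_add, Nat.add_sub_cancel' hin]
            gcongr
            exact choose_mul_factorial_rpow_le hγ1 hin
    rw [hL]
    refine (Finset.abs_sum_le_sum_abs _ _).trans ((Finset.sum_le_sum hterm).trans_eq ?_)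
    have hpow : ((n : ℝ) + 1) ^ (k + 1 - 1) = ((n : ℝ) + 1) * ((n : ℝ) + 1) ^ (k - 1) := by
      rw [← pow_succ']
      congr 1
      omega
    rw [hpow, Finset.sum_const, Finset.card_range, nsmul_eq_mul]
    push_cast
    ring

end
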